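/- The nonzero vectors c = (c^0, …, c^4) ∈ ℂ^5 satisfying c^i (c^{i+1} − c^{i+2} + c^{i+3} − c^{i+4}) = 0 for all i = 0,…,4 (indices mod 5) are exactly the cyclic rotations of the vectors (a, 0, 0, 0, 0), (a, a, a, 0, 0), (a, a, 0, −a, 0) and (a, a, a, a, a) with a ∈ ℂ, a ≠ 0. Moreover, for every such solution c one has c^i + (c^{i+1} − c^{i+2} + c^{i+3} − c^{i+4}) ≠ 0 for each i = 0,…,4. -/

import Mathlib

/-!
On the support of `c` the equations are linear, with the rows of a skew-symmetric circulant matrix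
as coefficients. Up to rotation there are seven nonempty supports. A support of size two forces one
of its entries to vanish, and so does one of size four. Supports of size one are unconstrained, the
two kinds of size three have one-dimensional kernels spanned by `(1,1,1,0,0)` and `(1,1,0,-1,0)`,
and the full support gives the constant vectors. The nonvanishing of `cⁱ + (…)` is then read off
from the list of solutions, since each of these expressions equals `a` or `-a`.
-/

/-- The classification with the rotation expressed by the index `s` at which the pattern starts,
so that `x s` plays the role of `a`. -/
theorem solution_pattern (x : Fin 5 → ℂ) (h : x ≠ 0)
    (e : ∀ i : Fin 5, x i * (x (i + 1) - x (i + 2) + x (i + 3) - x (i + 4)) = 0) :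
    ∃ s : Fin 5, x s ≠ 0 ∧
      ((x (s + 1) = 0 ∧ x (s + 2) = 0 ∧ x (s + 3) = 0 ∧ x (s + 4) = 0) ∨
       (x (s + 1) = x s ∧ x (s + 2) = x s ∧ x (s + 3) = 0 ∧ x (s + 4) = 0) ∨
       (x (s + 1) = x s ∧ x (s + 2) = 0 ∧ x (s + 3) = -x s ∧ x (s + 4) = 0) ∨
       (x (s + 1) = x s ∧ x (s + 2) = x s ∧ x (s + 3) = x s ∧ x (s + 4) = x s)) := by
  have h' : ¬ (x 0 = 0 ∧ x 1 = 0 ∧ x 2 = 0 ∧ x 3 = 0 ∧ x 4 = 0) := by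
    rintro ⟨h0, h1, h2, h3, h4⟩
    apply h
    ext i
    fin_cases i <;> assumption
  have e0 : x 0 * (x 1 - x 2 + x 3 - x 4) = 0 := e 0
  have e1 : x 1 * (x 2 - x 3 + x 4 - x 0) = 0 := e 1
  have e2 : x 2 * (x 3 - x 4 + x 0 - x 1) = 0 := e 2
  have e3 : x 3 * (x 4 - x 0 + x 1 - x 2) = 0 := e 3
  have e4 : x 4 * (x 0 - x 1 + x 2 - x 3) = 0 := e 4
  rw [mul_eq_zero] at e0 e1 e2 e3 e4
  simp only [Fin.exists_fin_succ, Fin.exists_fin_zero, Fin.reduceAdd, Fin.reduceSucc, Fin.isValue,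
    zero_add, Fin.succ_zero_eq_one, or_false]
  clear h e
  generalize x 0 = p, x 1 = q, x 2 = r, x 3 = s, x 4 = t at *
  -- One case for each of the `2 ^ 5` possible supports.
  by_cases p0 : p = 0 <;> by_cases q0 : q = 0 <;> by_cases r0 : r = 0 <;>
    by_cases s0 : s = 0 <;> by_cases t0 : t = 0 <;>
    simp only [p0, q0, r0, s0, t0, false_or, true_or] at h' e0 e1 e2 e3 e4 ⊢ <;> grind

/-- The nonzero vectors `c ∈ ℂ⁵` with
`cⁱ (c^{i+1} − c^{i+2} + c^{i+3} − c^{i+4}) = 0` for all `i` (indices mod 5)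
are exactly the cyclic rotations of `(a,0,0,0,0)`, `(a,a,a,0,0)`,
`(a,a,0,−a,0)` and `(a,a,a,a,a)` with `a ≠ 0`; moreover every such vector
satisfies `cⁱ + (c^{i+1} − c^{i+2} + c^{i+3} − c^{i+4}) ≠ 0` for each `i`. -/
theorem leadingCoeff_A4 (c : Fin 5 → ℂ) :
    ((c ≠ 0 ∧
        ∀ i : Fin 5, c i * (c (i + 1) - c (i + 2) + c (i + 3) - c (i + 4)) = 0) ↔
      ∃ a : ℂ, a ≠ 0 ∧ ∃ k : Fin 5,
        ((∀ j : Fin 5, c j = ![a, 0, 0, 0, 0] (j + k)) ∨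
         (∀ j : Fin 5, c j = ![a, a, a, 0, 0] (j + k)) ∨
         (∀ j : Fin 5, c j = ![a, a, 0, -a, 0] (j + k)) ∨
         (∀ j : Fin 5, c j = ![a, a, a, a, a] (j + k)))) ∧
    ((c ≠ 0 ∧
        ∀ i : Fin 5, c i * (c (i + 1) - c (i + 2) + c (i + 3) - c (i + 4)) = 0) →
      ∀ i : Fin 5, c i + (c (i + 1) - c (i + 2) + c (i + 3) - c (i + 4)) ≠ 0) := by
  have key : (c ≠ 0 ∧
        ∀ i : Fin 5, c i * (c (i + 1) - c (i + 2) + c (i + 3) - c (i + 4)) = 0) →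
      ∃ a : ℂ, a ≠ 0 ∧ ∃ k : Fin 5,
        ((∀ j : Fin 5, c j = ![a, 0, 0, 0, 0] (j + k)) ∨
         (∀ j : Fin 5, c j = ![a, a, a, 0, 0] (j + k)) ∨
         (∀ j : Fin 5, c j = ![a, a, 0, -a, 0] (j + k)) ∨
         (∀ j : Fin 5, c j = ![a, a, a, a, a] (j + k))) := by
    rintro ⟨h, e⟩
    obtain ⟨s, hs, H⟩ := solution_pattern c h e
    -- Reindexing by `j = s + m`, so that `j + k` with `k = -s` is `m`.
    have shift (v : Fin 5 → ℂ) (hv : ∀ m, c (s + m) = v m) (j : Fin 5) : c j = v (j + -s) := by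
      rw [← hv, add_comm j, add_neg_cancel_left]
    refine ⟨c s, hs, -s, H.imp (fun H => shift _ ?_) (Or.imp (fun H => shift _ ?_)
      (Or.imp (fun H => shift _ ?_) (fun H => shift _ ?_)))⟩ <;>
    · obtain ⟨h1, h2, h3, h4⟩ := H
      intro m
      fin_cases m <;> simp [h1, h2, h3, h4]
  refine ⟨⟨key, ?_⟩, fun hc => ?_⟩
  · rintro ⟨a, ha, k, H⟩
    constructor
    · -- In every pattern the entry in position `0`, hence `c (-k)`, equals `a`.
      intro h0
      apply ha
      rcases H with H | H | H | H <;> simpa [h0] using (H (-k)).symm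
    · intro i
      rcases H with H | H | H | H <;> simp only [H] <;> fin_cases k <;> fin_cases i <;> simp
  · obtain ⟨a, ha, k, H⟩ := key hc
    intro i
    rcases H with H | H | H | H <;> simp only [H] <;> fin_cases k <;> fin_cases i <;> simp [ha]
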